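/- Let X be a normed space, f : X → ℝ ∪ {−∞, +∞} a function, and u ∈ X a point with f(u) ∈ ℝ. Then: (a) the weak slope |df|(u) is finite if and only if the subdifferential ∂f(u) is nonempty; (b) if |df|(u) < +∞, then |df|(u) ≥ min{‖α‖_{X*} : α ∈ ∂f(u)}. -/

import Mathlib

open Set ENNReal

noncomputable section

/-- Ball-intersect-epigraph of `f` around `(u, c)` of radius `σ`, in the metric
`dist((w,μ),(w',μ')) = sqrt(dist(w,w')² + (μ-μ')²)` on `E × ℝ`. -/
def epiBallM {E : Type*} [MetricSpace E] (f : E → EReal) (u : E) (c σ : ℝ) : Set (E × ℝ) :=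
  {w | Real.sqrt ((dist w.1 u) ^ 2 + (w.2 - c) ^ 2) < σ ∧ f w.1 ≤ (w.2 : EReal)}

/-- `u` (with `f u = c ∈ ℝ`) is `δ`-regular for `f`. -/
def IsDeltaRegular {E : Type*} [MetricSpace E] (f : E → EReal) (u : E) (c : ℝ) (δ : ℝ) : Prop :=
  ∃ σ > 0, ∃ ν : E × ℝ → ℝ → E,
    ContinuousOn (fun z : (E × ℝ) × ℝ => ν z.1 z.2) (epiBallM f u c σ ×ˢ Icc 0 σ) ∧
    ∀ w ∈ epiBallM f u c σ, ∀ t ∈ Icc (0:ℝ) σ,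
      dist (ν w t) w.1 ≤ t ∧ f (ν w t) ≤ ((w.2 - δ * t : ℝ) : EReal)

/-- The weak slope `|df|(u)`, an element of `[0,∞]`. -/
def weakSlope {E : Type*} [MetricSpace E] (f : E → EReal) (u : E) (c : ℝ) : ℝ≥0∞ :=
  sSup {d : ℝ≥0∞ | ∃ δ : ℝ, 0 < δ ∧ IsDeltaRegular f u c δ ∧ d = ENNReal.ofReal δ}

variable {X : Type*} [NormedAddCommGroup X] [NormedSpace ℝ X]

/-- The set of `r ∈ ℝ` entering the definition of `f⁰_ε(u;v)`. -/
def gdirSetN (f : X → EReal) (u : X) (c : ℝ) (v : X) (ε : ℝ) : Set ℝ :=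
  {r | ∃ δ > 0, ∃ ν : X × ℝ → ℝ → X,
    ContinuousOn (fun z : (X × ℝ) × ℝ => ν z.1 z.2) (epiBallM f u c δ ×ˢ Ioc 0 δ) ∧
    ∀ w ∈ epiBallM f u c δ, ∀ t ∈ Ioc (0:ℝ) δ,
      ‖ν w t - v‖ < ε ∧ f (w.1 + t • ν w t) ≤ ((w.2 + r * t : ℝ) : EReal)}

/-- `f⁰_ε(u;v)`. -/
def gdirEps (f : X → EReal) (u : X) (c : ℝ) (v : X) (ε : ℝ) : EReal :=
  sInf ((fun r : ℝ => (r : EReal)) '' gdirSetN f u c v ε)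

/-- `f⁰(u;v) = sup_{ε>0} f⁰_ε(u;v)`. -/
def gdir (f : X → EReal) (u : X) (c : ℝ) (v : X) : EReal :=
  ⨆ ε : {e : ℝ // 0 < e}, gdirEps f u c v ε.1

/-- The Campa–Degiovanni subdifferential `∂f(u)`. -/
def subdiff (f : X → EReal) (u : X) (c : ℝ) : Set (X →L[ℝ] ℝ) :=
  {α | ∀ v : X, ((α v : ℝ) : EReal) ≤ gdir f u c v}

/-!
The condition `f⁰(u; v) ≤ r` cuts out a convex cone in `X × ℝ`, the epigraph of `f⁰(u; ·)`:
deformations in the directions `v₁` and `v₂` are added by running one after the other. By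
definition `∂f(u)` consists of the functionals lying below this cone, so by Hahn–Banach it contains
an element of norm at most `K` iff `-K‖v‖ ≤ r` on the cone. A deformation in a direction near `v`
with rate `r`, reparametrised to unit speed, makes `u` `δ`-regular for `δ` close to `-r / ‖v‖`, so
this inequality holds for `K = |df|(u)`. Conversely, `δ`-regularity gives the rate `-δs` in
directions of norm at most `s`; if `δ` is unbounded then `f⁰(u; 0) = -∞` and `∂f(u)` is empty.
-/

section SandwichTheorem

open scoped NNReal

variable {V : Type*} [SeminormedAddCommGroup V] [NormedSpace ℝ V]

/-- The epigraph of the seminorm `K‖·‖`, as a cone in `V × ℝ`. -/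
def normEpigraph (V : Type*) [SeminormedAddCommGroup V] [NormedSpace ℝ V] (K : ℝ≥0) :
    PointedCone ℝ (V × ℝ) where
  carrier := {p | K * ‖p.1‖ ≤ p.2}
  zero_mem' := by simp
  add_mem' {p q} hp hq := by
    calc K * ‖p.1 + q.1‖ ≤ K * (‖p.1‖ + ‖q.1‖) := by gcongr; exact norm_add_le _ _
      _ = K * ‖p.1‖ + K * ‖q.1‖ := mul_add _ _ _
      _ ≤ p.2 + q.2 := add_le_add hp hq
  smul_mem' := by
    rintro ⟨s, hs⟩ p hp
    calc K * ‖s • p.1‖ = s * (K * ‖p.1‖) := by rw [norm_smul, Real.norm_of_nonneg hs]; ring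
      _ ≤ s * p.2 := mul_le_mul_of_nonneg_left hp hs

/-- The continuous linear functionals lying below a cone `C` in `V × ℝ`. When `C` is the epigraph
of a sublinear function, these are the functionals below that function. -/
def linearMinorants (C : PointedCone ℝ (V × ℝ)) : Set (V →L[ℝ] ℝ) :=
  {α | ∀ p ∈ C, α p.1 ≤ p.2}

variable {C : PointedCone ℝ (V × ℝ)} {K : ℝ≥0}

theorem nonneg_of_mem_linearMinorants {α : V →L[ℝ] ℝ} (hα : α ∈ linearMinorants C) {p : V × ℝ}
    (hp : p ∈ C) : 0 ≤ p.2 + ‖α‖ * ‖p.1‖ := by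
  have hlower : -(‖α‖ * ‖p.1‖) ≤ α p.1 := (abs_le.1 (α.le_opNorm p.1)).1
  linarith [hα p hp]

theorem nonneg_of_mem_sup_normEpigraph (h : ∀ p ∈ C, 0 ≤ p.2 + K * ‖p.1‖) {r : ℝ}
    (hr : ((0 : V), r) ∈ C ⊔ normEpigraph V K) : 0 ≤ r := by
  obtain ⟨p, hp, q, hq, hpq⟩ := Submodule.mem_sup.1 hr
  obtain ⟨hfst, hsnd⟩ := Prod.ext_iff.1 hpq
  have hnorm : ‖q.1‖ = ‖p.1‖ := by rw [eq_neg_of_add_eq_zero_right hfst, norm_neg]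
  have hq' : K * ‖q.1‖ ≤ q.2 := hq
  rw [hnorm] at hq'
  have hsum : p.2 + q.2 = r := hsnd
  linarith [h p hp]

/-- M. Riesz extension of `(0, r) ↦ r` from the vertical axis, where nonnegativity on
`C ⊔ normEpigraph V K` encodes both the minorant property and the norm bound. -/
theorem exists_linearMap_nonneg_on_sup_normEpigraph (h : ∀ p ∈ C, 0 ≤ p.2 + K * ‖p.1‖) :
    ∃ g : V × ℝ →ₗ[ℝ] ℝ, (∀ r : ℝ, g (0, r) = r) ∧
      ∀ p ∈ C ⊔ normEpigraph V K, 0 ≤ g p := by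
  let verticalAxis : Submodule ℝ (V × ℝ) := Submodule.prod ⊥ ⊤
  obtain ⟨g, hg, hg_nonneg⟩ := riesz_extension (C ⊔ normEpigraph V K)
    ⟨verticalAxis, (LinearMap.snd ℝ V ℝ).domRestrict verticalAxis⟩
    (by
      rintro ⟨⟨x, r⟩, hx⟩ hmem
      obtain rfl : x = 0 := hx.1
      exact nonneg_of_mem_sup_normEpigraph h hmem)
    (fun p => by
      refine ⟨⟨(0, K * ‖p.1‖ - p.2), by simp [verticalAxis]⟩, Submodule.mem_sup_right ?_⟩
      change K * ‖(0 : V) + p.1‖ ≤ K * ‖p.1‖ - p.2 + p.2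
      simp)
  exact ⟨g, fun r => hg ⟨(0, r), by simp [verticalAxis]⟩, hg_nonneg⟩

theorem exists_mem_linearMinorants_norm_le (h : ∀ p ∈ C, 0 ≤ p.2 + K * ‖p.1‖) :
    ∃ α ∈ linearMinorants C, ‖α‖ ≤ K := by
  obtain ⟨g, hg_vert, hg_nonneg⟩ := exists_linearMap_nonneg_on_sup_normEpigraph h
  let φ : V →ₗ[ℝ] ℝ := -(g ∘ₗ LinearMap.inl ℝ V ℝ)
  have hφ (x : V) (r : ℝ) (hx : (x, r) ∈ C ⊔ normEpigraph V K) : φ x ≤ r := by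
    have hsplit : g (x, r) = r - φ x := by
      have hdecomp : (x, r) = (x, 0) + (0, r) := by simp
      rw [hdecomp, map_add, hg_vert]
      simp [φ, add_comm]
    linarith [hg_nonneg _ hx]
  have hφK (x : V) : φ x ≤ K * ‖x‖ :=
    hφ x _ (Submodule.mem_sup_right (le_refl (K * ‖x‖)))
  have hφ_abs (x : V) : ‖φ x‖ ≤ K * ‖x‖ := by
    refine abs_le.2 ⟨?_, hφK x⟩
    have hneg := hφK (-x)
    rw [map_neg, norm_neg] at hneg
    linarith
  exact ⟨φ.mkContinuous K hφ_abs, fun p hp => hφ p.1 p.2 (Submodule.mem_sup_left hp),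
    φ.mkContinuous_norm_le K.2 hφ_abs⟩

theorem exists_norm_minimal_mem_linearMinorants (h : (linearMinorants C).Nonempty) :
    ∃ α ∈ linearMinorants C, ∀ β ∈ linearMinorants C, ‖α‖ ≤ ‖β‖ := by
  let norms : Set ℝ≥0 := (fun β => ‖β‖₊) '' linearMinorants C
  have hinf : ∀ p ∈ C, 0 ≤ p.2 + (sInf norms : ℝ≥0) * ‖p.1‖ := by
    intro p hp
    have hclosed : IsClosed {L : ℝ≥0 | 0 ≤ p.2 + L * ‖p.1‖} :=
      isClosed_le continuous_const (by fun_prop)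
    have hsub : norms ⊆ {L : ℝ≥0 | 0 ≤ p.2 + L * ‖p.1‖} := by
      rintro _ ⟨β, hβ, rfl⟩
      exact nonneg_of_mem_linearMinorants hβ hp
    exact closure_minimal hsub hclosed (csInf_mem_closure (h.image _) (OrderBot.bddBelow _))
  obtain ⟨α, hα, hα_norm⟩ := exists_mem_linearMinorants_norm_le hinf
  refine ⟨α, hα, fun β hβ => hα_norm.trans ?_⟩
  exact NNReal.coe_le_coe.2 (csInf_le (OrderBot.bddBelow norms) ⟨β, hβ, rfl⟩)

end SandwichTheorem

section Continuity

theorem continuousOn_prod_Icc_of_dist_le {Y E : Type*} [TopologicalSpace Y] [PseudoMetricSpace E]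
    {π : Y → E} {η : Y → ℝ → E} {S : Set Y} {δ : ℝ} (hπ : ContinuousOn π S)
    (hη : ContinuousOn (fun z : Y × ℝ => η z.1 z.2) (S ×ˢ Ioc 0 δ))
    (hdist : ∀ y ∈ S, ∀ t ∈ Icc 0 δ, dist (η y t) (π y) ≤ t) :
    ContinuousOn (fun z : Y × ℝ => η z.1 z.2) (S ×ˢ Icc 0 δ) := by
  rintro ⟨y, t⟩ ⟨hy, ht⟩
  rcases ht.1.eq_or_lt with rfl | ht_pos
  · have hbase : nhds (π y) = nhds (η y 0) := by
      refine (Metric.inseparable_iff.2 (le_antisymm ?_ dist_nonneg)).nhds_eq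
      rw [dist_comm]
      exact hdist y hy 0 ht
    have hπ_tendsto : Filter.Tendsto (fun z : Y × ℝ => π z.1)
        (nhdsWithin (y, 0) (S ×ˢ Icc 0 δ)) (nhds (η y 0)) :=
      hbase ▸ hπ.comp continuousOn_fst (fun z hz => hz.1) (y, 0) ⟨hy, ht⟩
    have htime : Filter.Tendsto (fun z : Y × ℝ => z.2)
        (nhdsWithin (y, 0) (S ×ˢ Icc 0 δ)) (nhds 0) :=
      continuousWithinAt_snd
    refine hπ_tendsto.congr_dist (squeeze_zero' (.of_forall fun _ => dist_nonneg) ?_ htime)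
    filter_upwards [self_mem_nhdsWithin] with z hz
    rw [dist_comm]
    exact hdist z.1 hz.1 z.2 hz.2
  · refine (hη (y, t) ⟨hy, ht_pos, ht.2⟩).mono_of_mem_nhdsWithin ?_
    have hpos : ∀ᶠ z : Y × ℝ in nhds (y, t), 0 < z.2 := continuousAt_snd.eventually_const_lt ht_pos
    filter_upwards [self_mem_nhdsWithin, hpos.filter_mono nhdsWithin_le_nhds] with z hz hz_pos
    exact ⟨hz.1, hz_pos, hz.2.2⟩

end Continuity

section EpigraphBalls

theorem epiBallM_mono {E : Type*} [MetricSpace E] (f : E → EReal) (u : E) (c : ℝ) {ρ σ : ℝ}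
    (h : ρ ≤ σ) : epiBallM f u c ρ ⊆ epiBallM f u c σ :=
  fun _ hw => ⟨hw.1.trans_le h, hw.2⟩

theorem add_mem_epiBallM {V : Type*} [NormedAddCommGroup V] {f : V → EReal} {u y : V}
    {w : V × ℝ} {c σ s : ℝ} (hw : w ∈ epiBallM f u c σ)
    (hf : f (w.1 + y) ≤ ((w.2 + s : ℝ) : EReal)) :
    (w.1 + y, w.2 + s) ∈ epiBallM f u c (σ + (‖y‖ + |s|)) := by
  let offset : WithLp 2 (V × ℝ) := WithLp.toLp 2 (w.1 - u, w.2 - c)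
  let horizontal : WithLp 2 (V × ℝ) := WithLp.toLp 2 (y, 0)
  let vertical : WithLp 2 (V × ℝ) := WithLp.toLp 2 (0, s)
  have hoffset : ‖offset‖ < σ := by
    simpa [offset, WithLp.prod_norm_eq_of_L2, dist_eq_norm] using hw.1
  refine ⟨?_, hf⟩
  calc Real.sqrt (dist (w.1 + y) u ^ 2 + (w.2 + s - c) ^ 2)
      = ‖offset + horizontal + vertical‖ := by
        simp [offset, horizontal, vertical, WithLp.prod_norm_eq_of_L2, dist_eq_norm,
          add_sub_right_comm]
    _ ≤ ‖offset‖ + ‖horizontal‖ + ‖vertical‖ := norm_add₃_le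
    _ = ‖offset‖ + (‖y‖ + |s|) := by simp [horizontal, vertical, add_assoc]
    _ < σ + (‖y‖ + |s|) := by gcongr

theorem add_smul_mem_epiBallM {f : X → EReal} {u y : X} {w : X × ℝ} {c σ t r B : ℝ}
    (hw : w ∈ epiBallM f u c σ) (ht : t ∈ Icc 0 σ) (hy : ‖y‖ ≤ B)
    (hf : f (w.1 + t • y) ≤ ((w.2 + r * t : ℝ) : EReal)) :
    (w.1 + t • y, w.2 + r * t) ∈ epiBallM f u c (σ * (1 + B + |r|)) := by
  refine epiBallM_mono f u c ?_ (add_mem_epiBallM hw hf)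
  calc σ + (‖t • y‖ + |r * t|) = σ + t * (‖y‖ + |r|) := by
        rw [norm_smul, abs_mul, Real.norm_of_nonneg ht.1, abs_of_nonneg ht.1]; ring
    _ ≤ σ + σ * (B + |r|) := by
        gcongr
        · exact ht.1.trans ht.2
        · exact ht.2
    _ = σ * (1 + B + |r|) := by ring

end EpigraphBalls

section DirectionalDerivative

variable {f : X → EReal} {u v v₁ v₂ : X} {c r r₁ r₂ ε ε₁ ε₂ : ℝ}

theorem isUpperSet_gdirSetN (f : X → EReal) (u : X) (c : ℝ) (v : X) (ε : ℝ) :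
    IsUpperSet (gdirSetN f u c v ε) := by
  rintro r r' hr ⟨δ, hδ, ν, hν, hdescent⟩
  refine ⟨δ, hδ, ν, hν, fun w hw t ht => (hdescent w hw t ht).imp_right fun h => h.trans ?_⟩
  exact EReal.coe_le_coe_iff.2 (by gcongr; exact ht.1.le)

theorem zero_mem_gdirSetN_zero (f : X → EReal) (u : X) (c : ℝ) (hε : 0 < ε) :
    0 ∈ gdirSetN f u c 0 ε :=
  ⟨1, one_pos, fun _ _ => 0, continuousOn_const, fun w hw t _ => by simpa [hε] using hw.2⟩

theorem mul_mem_gdirSetN_smul {s : ℝ} (hs : 0 < s) (h : r ∈ gdirSetN f u c v ε) :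
    s * r ∈ gdirSetN f u c (s • v) (s * ε) := by
  obtain ⟨δ, hδ, ν, hν, hdescent⟩ := h
  have hball := epiBallM_mono f u c (min_le_left δ (δ / s))
  have htime : ∀ t ∈ Ioc 0 (min δ (δ / s)), s * t ∈ Ioc 0 δ := fun t ht =>
    ⟨mul_pos hs ht.1, (le_div_iff₀' hs).1 (ht.2.trans (min_le_right _ _))⟩
  refine ⟨min δ (δ / s), by positivity, fun w t => s • ν w (s * t), ?_, fun w hw t ht => ?_⟩
  · refine (hν.comp (f := fun z : (X × ℝ) × ℝ => (z.1, s * z.2)) (by fun_prop) ?_).const_smul s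
    exact fun z hz => ⟨hball hz.1, htime z.2 hz.2⟩
  · obtain ⟨hnear, hrate⟩ := hdescent w (hball hw) (s * t) (htime t ht)
    constructor
    · rw [← smul_sub, norm_smul, Real.norm_of_nonneg hs.le]
      gcongr
    · rwa [smul_smul, mul_comm t s, mul_comm s r, mul_assoc]

theorem add_mem_gdirSetN_add (h₁ : r₁ ∈ gdirSetN f u c v₁ ε₁) (h₂ : r₂ ∈ gdirSetN f u c v₂ ε₂) :
    r₁ + r₂ ∈ gdirSetN f u c (v₁ + v₂) (ε₁ + ε₂) := by
  obtain ⟨δ₁, hδ₁, ν₁, hν₁, hdescent₁⟩ := h₁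
  obtain ⟨δ₂, hδ₂, ν₂, hν₂, hdescent₂⟩ := h₂
  let M : ℝ := 1 + (‖v₁‖ + |ε₁|) + |r₁|
  have hM : 1 ≤ M := by simp only [M, add_assoc, le_add_iff_nonneg_right]; positivity
  let δ := min δ₁ (δ₂ / M)
  have hδ : 0 < δ := by positivity
  have hδδ₁ : δ ≤ δ₁ := min_le_left _ _
  have hδM : δ * M ≤ δ₂ := (le_div_iff₀ (by positivity)).1 (min_le_right _ _)
  have hδδ₂ : δ ≤ δ₂ := (le_mul_of_one_le_right hδ.le hM).trans hδM
  have hball := epiBallM_mono f u c hδδ₁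
  have hmoved : ∀ w ∈ epiBallM f u c δ, ∀ t ∈ Ioc 0 δ,
      (w.1 + t • ν₁ w t, w.2 + r₁ * t) ∈ epiBallM f u c δ₂ := by
    intro w hw t ht
    obtain ⟨hnear, hrate⟩ := hdescent₁ w (hball hw) t ⟨ht.1, ht.2.trans hδδ₁⟩
    have hnorm : ‖ν₁ w t‖ ≤ ‖v₁‖ + |ε₁| := by
      linarith [norm_le_insert' (ν₁ w t) v₁, le_abs_self ε₁]
    exact epiBallM_mono f u c hδM
      (add_smul_mem_epiBallM hw (Ioc_subset_Icc_self ht) hnorm hrate)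
  refine ⟨δ, hδ, fun w t => ν₁ w t + ν₂ (w.1 + t • ν₁ w t, w.2 + r₁ * t) t, ?_,
    fun w hw t ht => ?_⟩
  · have hν₁' : ContinuousOn (fun z : (X × ℝ) × ℝ => ν₁ z.1 z.2) (epiBallM f u c δ ×ˢ Ioc 0 δ) :=
      hν₁.mono (prod_mono hball (Ioc_subset_Ioc_right hδδ₁))
    refine hν₁'.add (hν₂.comp (f := fun z : (X × ℝ) × ℝ =>
      ((z.1.1 + z.2 • ν₁ z.1 z.2, z.1.2 + r₁ * z.2), z.2)) (by fun_prop) ?_)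
    exact fun z hz => ⟨hmoved z.1 hz.1 z.2 hz.2, hz.2.1, hz.2.2.trans hδδ₂⟩
  · obtain ⟨hnear₁, -⟩ := hdescent₁ w (hball hw) t ⟨ht.1, ht.2.trans hδδ₁⟩
    obtain ⟨hnear₂, hrate₂⟩ := hdescent₂ _ (hmoved w hw t ht) t ⟨ht.1, ht.2.trans hδδ₂⟩
    constructor
    · rw [add_sub_add_comm]
      exact (norm_add_le _ _).trans_lt (add_lt_add hnear₁ hnear₂)
    · rwa [smul_add, ← add_assoc, add_mul, ← add_assoc]

theorem gdirEps_le_coe_iff :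
    gdirEps f u c v ε ≤ r ↔ ∀ r' : ℝ, r < r' → r' ∈ gdirSetN f u c v ε := by
  constructor
  · intro h r' hr'
    obtain ⟨_, ⟨ρ, hρ, rfl⟩, hρr'⟩ := sInf_lt_iff.1 (h.trans_lt (EReal.coe_lt_coe_iff.2 hr'))
    exact isUpperSet_gdirSetN f u c v ε (EReal.coe_lt_coe_iff.1 hρr').le hρ
  · intro h
    exact EReal.le_of_forall_lt_iff_le.1 fun r' hr' =>
      sInf_le ⟨r', h r' (EReal.coe_lt_coe_iff.1 hr'), rfl⟩

theorem gdir_le_coe_iff :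
    gdir f u c v ≤ r ↔ ∀ ε > 0, ∀ r' : ℝ, r < r' → r' ∈ gdirSetN f u c v ε := by
  simp only [gdir, iSup_le_iff, Subtype.forall, gdirEps_le_coe_iff, gt_iff_lt]

theorem gdir_zero_le (f : X → EReal) (u : X) (c : ℝ) : gdir f u c 0 ≤ (0 : ℝ) :=
  gdir_le_coe_iff.2 fun ε hε _ hr' =>
    isUpperSet_gdirSetN f u c 0 ε hr'.le (zero_mem_gdirSetN_zero f u c hε)

theorem gdir_smul_le {s : ℝ} (hs : 0 ≤ s) (h : gdir f u c v ≤ r) :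
    gdir f u c (s • v) ≤ (s * r : ℝ) := by
  rcases hs.eq_or_lt with rfl | hs
  · simpa using gdir_zero_le f u c
  refine gdir_le_coe_iff.2 fun ε hε r' hr' => ?_
  have hmem := mul_mem_gdirSetN_smul hs
    (gdir_le_coe_iff.1 h (ε / s) (by positivity) (r' / s) ((lt_div_iff₀' hs).2 hr'))
  rwa [mul_div_cancel₀ r' hs.ne', mul_div_cancel₀ ε hs.ne'] at hmem

theorem gdir_add_le (h₁ : gdir f u c v₁ ≤ r₁) (h₂ : gdir f u c v₂ ≤ r₂) :
    gdir f u c (v₁ + v₂) ≤ (r₁ + r₂ : ℝ) := by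
  refine gdir_le_coe_iff.2 fun ε hε r' hr' => ?_
  let gap := r' - (r₁ + r₂)
  have hgap : 0 < gap := sub_pos.2 hr'
  have hmem := add_mem_gdirSetN_add
    (gdir_le_coe_iff.1 h₁ (ε / 2) (half_pos hε) (r₁ + gap / 2)
      (lt_add_of_pos_right _ (half_pos hgap)))
    (gdir_le_coe_iff.1 h₂ (ε / 2) (half_pos hε) (r₂ + gap / 2)
      (lt_add_of_pos_right _ (half_pos hgap)))
  have hrate : r₁ + gap / 2 + (r₂ + gap / 2) = r' := by simp only [gap]; ring
  rwa [hrate, add_halves] at hmem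

/-- The epigraph of the sublinear function `f⁰(u; ·)`, as a cone in `X × ℝ`. -/
def gdirEpigraph (f : X → EReal) (u : X) (c : ℝ) : PointedCone ℝ (X × ℝ) where
  carrier := {p | gdir f u c p.1 ≤ p.2}
  zero_mem' := gdir_zero_le f u c
  add_mem' := gdir_add_le
  smul_mem' s _ := gdir_smul_le s.2

theorem subdiff_eq_linearMinorants (f : X → EReal) (u : X) (c : ℝ) :
    subdiff f u c = linearMinorants (gdirEpigraph f u c) := by
  ext α
  refine ⟨fun hα p hp => EReal.coe_le_coe_iff.1 ((hα p.1).trans hp), fun hα v => ?_⟩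
  exact EReal.le_of_forall_lt_iff_le.1 fun r hr => EReal.coe_le_coe_iff.2 (hα (v, r) hr.le)

end DirectionalDerivative

section WeakSlope

theorem IsDeltaRegular.ofReal_le_weakSlope {E : Type*} [MetricSpace E] {f : E → EReal} {u : E}
    {c δ : ℝ} (h : IsDeltaRegular f u c δ) : ENNReal.ofReal δ ≤ weakSlope f u c := by
  rcases le_or_gt δ 0 with hδ | hδ
  · simp [ENNReal.ofReal_of_nonpos hδ]
  · exact le_sSup ⟨δ, hδ, h, rfl⟩

variable {f : X → EReal} {u v : X} {c r ε : ℝ}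

theorem isDeltaRegular_neg_of_mem_gdirSetN (hv : ‖v‖ + ε ≤ 1) (h : r ∈ gdirSetN f u c v ε) :
    IsDeltaRegular f u c (-r) := by
  obtain ⟨δ, hδ, ν, hν, hdescent⟩ := h
  have hdist : ∀ w ∈ epiBallM f u c δ, ∀ t ∈ Icc 0 δ, dist (w.1 + t • ν w t) w.1 ≤ t := by
    intro w hw t ht
    rcases ht.1.eq_or_lt with rfl | ht_pos
    · simp
    have hunit : ‖ν w t‖ ≤ 1 := by
      linarith [norm_le_insert' (ν w t) v, (hdescent w hw t ⟨ht_pos, ht.2⟩).1]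
    rw [dist_self_add_left, norm_smul, Real.norm_of_nonneg ht.1]
    exact mul_le_of_le_one_right ht.1 hunit
  refine ⟨δ, hδ, fun w t => w.1 + t • ν w t, ?_, fun w hw t ht => ⟨hdist w hw t ht, ?_⟩⟩
  · exact continuousOn_prod_Icc_of_dist_le (η := fun w t => w.1 + t • ν w t)
      continuousOn_fst (by fun_prop) hdist
  · rcases ht.1.eq_or_lt with rfl | ht_pos
    · simpa using hw.2
    · simpa [sub_eq_add_neg] using (hdescent w hw t ⟨ht_pos, ht.2⟩).2

theorem ofReal_neg_div_le_weakSlope (hpos : 0 < ‖v‖ + ε) (h : r ∈ gdirSetN f u c v ε) :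
    ENNReal.ofReal (-r / (‖v‖ + ε)) ≤ weakSlope f u c := by
  have hscaled := mul_mem_gdirSetN_smul (inv_pos.2 hpos) h
  have hunit : ‖(‖v‖ + ε)⁻¹ • v‖ + (‖v‖ + ε)⁻¹ * ε ≤ 1 := by
    rw [norm_smul, Real.norm_of_nonneg (by positivity), ← mul_add, inv_mul_cancel₀ hpos.ne']
  have hregular := isDeltaRegular_neg_of_mem_gdirSetN hunit hscaled
  rw [← mul_neg, inv_mul_eq_div] at hregular
  exact hregular.ofReal_le_weakSlope

theorem nonneg_of_mem_gdirEpigraph (hfin : weakSlope f u c < ⊤) {p : X × ℝ}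
    (hp : p ∈ gdirEpigraph f u c) : 0 ≤ p.2 + (weakSlope f u c).toNNReal * ‖p.1‖ := by
  have hperturbed : ∀ η > 0,
      0 ≤ p.2 + η + (weakSlope f u c).toNNReal * (‖p.1‖ + η) := by
    intro η hη
    have hpos : 0 < ‖p.1‖ + η := by positivity
    have hslope := ofReal_neg_div_le_weakSlope hpos
      (gdir_le_coe_iff.1 hp η hη (p.2 + η) (lt_add_of_pos_right _ hη))
    rw [ENNReal.ofReal_le_iff_le_toReal hfin.ne, div_le_iff₀ hpos] at hslope
    rw [ENNReal.coe_toNNReal_eq_toReal]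
    linarith
  have hlim : Filter.Tendsto
      (fun η : ℝ => p.2 + η + (weakSlope f u c).toNNReal * (‖p.1‖ + η))
      (nhdsWithin 0 (Ioi 0)) (nhds (p.2 + 0 + (weakSlope f u c).toNNReal * (‖p.1‖ + 0))) :=
    (Continuous.tendsto (by fun_prop) 0).mono_left nhdsWithin_le_nhds
  simpa using ge_of_tendsto hlim (by filter_upwards [self_mem_nhdsWithin] using hperturbed)

theorem IsDeltaRegular.neg_mem_gdirSetN_zero {δ : ℝ} (h : IsDeltaRegular f u c δ) (hε : 1 < ε) :
    -δ ∈ gdirSetN f u c 0 ε := by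
  obtain ⟨σ, hσ, ν, hν, hdescent⟩ := h
  refine ⟨σ, hσ, fun w t => t⁻¹ • (ν w t - w.1), ?_, fun w hw t ht => ?_⟩
  · have hν' : ContinuousOn (fun z : (X × ℝ) × ℝ => ν z.1 z.2) (epiBallM f u c σ ×ˢ Ioc 0 σ) :=
      hν.mono (prod_mono_right Ioc_subset_Icc_self)
    exact (continuousOn_snd.inv₀ fun z hz => hz.2.1.ne').smul (hν'.sub (by fun_prop))
  · obtain ⟨hdist, hrate⟩ := hdescent w hw t (Ioc_subset_Icc_self ht)
    constructor
    · rw [sub_zero, norm_smul, norm_inv, Real.norm_of_nonneg ht.1.le, ← dist_eq_norm]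
      exact ((inv_mul_le_one₀ ht.1).2 hdist).trans_lt hε
    · rwa [smul_inv_smul₀ ht.1.ne', add_sub_cancel, neg_mul, ← sub_eq_add_neg]

theorem gdir_zero_eq_bot_of_weakSlope_eq_top (h : weakSlope f u c = ⊤) : gdir f u c 0 = ⊥ := by
  have hrate (ε : ℝ) (hε : 0 < ε) (r : ℝ) : r ∈ gdirSetN f u c 0 ε := by
    have hlt : ENNReal.ofReal (-r / (ε / 2)) < weakSlope f u c := h ▸ ENNReal.ofReal_lt_top
    obtain ⟨_, ⟨δ, hδ, hregular, rfl⟩, hδ_lt⟩ := lt_sSup_iff.1 hlt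
    have hr : ε / 2 * -δ ≤ r := by
      have := (div_lt_iff₀' (half_pos hε)).1 ((ENNReal.ofReal_lt_ofReal_iff hδ).1 hδ_lt)
      linarith
    have hscaled := mul_mem_gdirSetN_smul (half_pos hε)
      (hregular.neg_mem_gdirSetN_zero one_lt_two)
    rw [smul_zero, div_mul_cancel₀ ε two_ne_zero] at hscaled
    exact isUpperSet_gdirSetN f u c 0 ε hr hscaled
  refine (EReal.eq_bot_iff_forall_lt _).2 fun r => ?_
  exact (gdir_le_coe_iff.2 fun ε hε r' _ => hrate ε hε r').trans_lt
    (EReal.coe_lt_coe_iff.2 (sub_one_lt r))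

theorem weakSlope_lt_top_of_subdiff_nonempty (h : (subdiff f u c).Nonempty) :
    weakSlope f u c < ⊤ := by
  obtain ⟨α, hα⟩ := h
  by_contra hinf
  have hle : ((α 0 : ℝ) : EReal) ≤ ⊥ :=
    gdir_zero_eq_bot_of_weakSlope_eq_top (not_lt_top_iff.1 hinf) ▸ hα 0
  exact EReal.coe_ne_bot _ (le_bot_iff.1 hle)

theorem exists_mem_subdiff_norm_le_weakSlope (hfin : weakSlope f u c < ⊤) :
    ∃ α ∈ subdiff f u c, ENNReal.ofReal ‖α‖ ≤ weakSlope f u c := by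
  obtain ⟨α, hα, hα_norm⟩ :=
    exists_mem_linearMinorants_norm_le fun p => nonneg_of_mem_gdirEpigraph (p := p) hfin
  rw [← subdiff_eq_linearMinorants] at hα
  exact ⟨α, hα, (ENNReal.ofReal_le_iff_le_toReal hfin.ne).2 hα_norm⟩

end WeakSlope

/-- Campa–Degiovanni / Proposition 1.  Let `X` be a normed space,
`f : X → ℝ ∪ {−∞,+∞}` and `u ∈ X` with `f u = c ∈ ℝ`.  Then
(a) the weak slope `|df|(u)` is finite iff `∂f(u) ≠ ∅`;
(b) if `|df|(u) < +∞` then `|df|(u) ≥ min{‖α‖ : α ∈ ∂f(u)}` (the minimum being attained). -/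
theorem weakSlope_finite_iff_subdiff_nonempty_and_ge_min
    (f : X → EReal) (u : X) (c : ℝ) (hc : f u = (c : EReal)) :
    (weakSlope f u c < ⊤ ↔ (subdiff f u c).Nonempty) ∧
    (weakSlope f u c < ⊤ →
      ∃ α ∈ subdiff f u c, (∀ β ∈ subdiff f u c, ‖α‖ ≤ ‖β‖) ∧
        ENNReal.ofReal ‖α‖ ≤ weakSlope f u c) := by
  have hmin : weakSlope f u c < ⊤ →
      ∃ α ∈ subdiff f u c, (∀ β ∈ subdiff f u c, ‖α‖ ≤ ‖β‖) ∧
        ENNReal.ofReal ‖α‖ ≤ weakSlope f u c := by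
    intro hfin
    obtain ⟨α₀, hα₀, hα₀_norm⟩ := exists_mem_subdiff_norm_le_weakSlope hfin
    rw [subdiff_eq_linearMinorants] at hα₀ ⊢
    obtain ⟨α, hα, hα_min⟩ := exists_norm_minimal_mem_linearMinorants ⟨α₀, hα₀⟩
    exact ⟨α, hα, hα_min, (ENNReal.ofReal_le_ofReal (hα_min α₀ hα₀)).trans hα₀_norm⟩
  refine ⟨⟨fun hfin => ?_, weakSlope_lt_top_of_subdiff_nonempty⟩, hmin⟩
  obtain ⟨α, hα, -⟩ := hmin hfin
  exact ⟨α, hα⟩
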